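/- Let θ_j ∈ (0,1/2) for j ≥ 0 and let E ⊆ ℝ^d be the associated tensorized Cantor set. Then the Hausdorff dimension of E equals d if and only if Θ_k^{1/k} → 1/2 as k → ∞. -/

import Mathlib

open MeasureTheory Filter
open scoped ENNReal

/-- `Θ_k = θ_0 θ_1 ⋯ θ_{k-1}`. -/
noncomputable def Theta (θ : ℕ → ℝ) (k : ℕ) : ℝ := ∏ j ∈ Finset.range k, θ j

/-- Signs `±1` indexed by booleans. -/
def sgn (b : Bool) : ℝ := if b then 1 else -1

/-- Midpoint `m_σ = ∑_{j<k} σ_j (1-θ_j) Θ_j / 2` associated to a sign pattern `σ ∈ {−1,1}^k`. -/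
noncomputable def cmid (θ : ℕ → ℝ) {k : ℕ} (σ : Fin k → Bool) : ℝ :=
  ∑ j : Fin k, sgn (σ j) * (1 - θ (j : ℕ)) * Theta θ (j : ℕ) / 2

/-- The white interval of generation `k`: closed interval of length `Θ_k` centered at `m_σ`. -/
noncomputable def whiteInterval (θ : ℕ → ℝ) {k : ℕ} (σ : Fin k → Bool) : Set ℝ :=
  Set.Icc (cmid θ σ - Theta θ k / 2) (cmid θ σ + Theta θ k / 2)

/-- The Cantor set with dissection ratios `θ_j`. -/
noncomputable def cantor1 (θ : ℕ → ℝ) : Set ℝ :=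
  ⋂ k : ℕ, ⋃ σ : Fin k → Bool, whiteInterval θ σ

/-- The tensorized Cantor set
`E = {x ∈ [−1/2,1/2]^d : x_i ∈ E^{(1)} for some i} ⊆ ℝ^d`. -/
noncomputable def tensorCantor (d : ℕ) (θ : ℕ → ℝ) : Set (EuclideanSpace ℝ (Fin d)) :=
  {x | (∀ i, x i ∈ Set.Icc (-(1 : ℝ) / 2) (1 / 2)) ∧ ∃ i, x i ∈ cantor1 θ}

lemma Theta_pos {θ : ℕ → ℝ} (hθ : ∀ j, θ j ∈ Set.Ioo (0 : ℝ) (1 / 2)) (k : ℕ) : 0 < Theta θ k :=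
  Finset.prod_pos fun j _ => (hθ j).1

lemma Theta_zero (θ : ℕ → ℝ) : Theta θ 0 = 1 := by simp [Theta]

lemma Theta_succ (θ : ℕ → ℝ) (k : ℕ) : Theta θ (k + 1) = Theta θ k * θ k := by
  simp [Theta, Finset.prod_range_succ]

lemma two_mul_Theta_succ_le {θ : ℕ → ℝ} (hθ : ∀ j, θ j ∈ Set.Ioo (0 : ℝ) (1 / 2)) (k : ℕ) :
    2 * Theta θ (k + 1) ≤ Theta θ k := by
  rw [Theta_succ]
  nlinarith [Theta_pos hθ k, (hθ k).2]

lemma Theta_le {θ : ℕ → ℝ} (hθ : ∀ j, θ j ∈ Set.Ioo (0 : ℝ) (1 / 2)) (k : ℕ) :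
    Theta θ k ≤ (1 / 2) ^ k := by
  induction k with
  | zero => simp [Theta_zero]
  | succ k ih =>
    have := two_mul_Theta_succ_le hθ k
    rw [pow_succ]; linarith

lemma Theta_tendsto {θ : ℕ → ℝ} (hθ : ∀ j, θ j ∈ Set.Ioo (0 : ℝ) (1 / 2)) :
    Tendsto (Theta θ) atTop (nhds 0) :=
  squeeze_zero (fun k => (Theta_pos hθ k).le) (Theta_le hθ)
    (tendsto_pow_atTop_nhds_zero_of_lt_one (by norm_num) (by norm_num))

/-- integer part of `2^k y` -/
noncomputable def Nf (y : ℝ) (k : ℕ) : ℤ := ⌊(2 : ℝ) ^ k * y⌋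

lemma Nf_succ (y : ℝ) (k : ℕ) : Nf y (k + 1) = 2 * Nf y k ∨ Nf y (k + 1) = 2 * Nf y k + 1 := by
  have h1 : 2 * Nf y k ≤ Nf y (k + 1) := by
    unfold Nf
    rw [Int.le_floor]
    push_cast
    have := Int.floor_le ((2 : ℝ) ^ k * y)
    rw [pow_succ]; linarith
  have h2 : Nf y (k + 1) < 2 * Nf y k + 2 := by
    unfold Nf
    rw [Int.floor_lt]
    push_cast
    have := Int.lt_floor_add_one ((2 : ℝ) ^ k * y)
    rw [pow_succ]; linarith
  omega

lemma Nf_zero {y : ℝ} (hy : y ∈ Set.Ico (0 : ℝ) 1) : Nf y 0 = 0 := by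
  unfold Nf
  rw [Int.floor_eq_iff]
  simpa using hy

/-- left endpoints -/
noncomputable def Lf (θ : ℕ → ℝ) (y : ℝ) : ℕ → ℝ
  | 0 => -1 / 2
  | k + 1 => Lf θ y k + ((Nf y (k + 1) : ℝ) - 2 * Nf y k) * (Theta θ k - Theta θ (k + 1))

lemma Lf_diff {θ : ℕ → ℝ} (hθ : ∀ j, θ j ∈ Set.Ioo (0 : ℝ) (1 / 2)) {y y' : ℝ}
    (hy : y ∈ Set.Ico (0 : ℝ) 1) (hy' : y' ∈ Set.Ico (0 : ℝ) 1) (k : ℕ) :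
    Nf y k ≤ Nf y' k → ((Nf y' k : ℝ) - Nf y k) * Theta θ k ≤ Lf θ y' k - Lf θ y k := by
  induction k with
  | zero => intro _; simp [Nf_zero hy, Nf_zero hy', Lf]
  | succ k ih =>
    intro h
    have a := Nf_succ y k
    have a' := Nf_succ y' k
    have h0 : Nf y k ≤ Nf y' k := by omega
    have h1 : 0 ≤ Nf y' (k + 1) - Nf y' k - (Nf y (k + 1) - Nf y k) := by omega
    have h1' : (0 : ℝ) ≤ Nf y' (k + 1) - Nf y' k - (Nf y (k + 1) - Nf y k) := by exact_mod_cast h1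
    have := ih h0
    have h2 := two_mul_Theta_succ_le hθ k
    simp only [Lf]
    nlinarith [mul_nonneg h1' (sub_nonneg.2 h2)]

lemma Lf_mono {θ : ℕ → ℝ} (hθ : ∀ j, θ j ∈ Set.Ioo (0 : ℝ) (1 / 2)) (y : ℝ) :
    Monotone (Lf θ y) := by
  refine monotone_nat_of_le_succ fun k => ?_
  have h2 := two_mul_Theta_succ_le hθ k
  have h3 := Theta_pos hθ (k + 1)
  simp only [Lf]
  rcases Nf_succ y k with h | h <;> rw [h] <;> push_cast <;> nlinarith

lemma Lf_anti {θ : ℕ → ℝ} (hθ : ∀ j, θ j ∈ Set.Ioo (0 : ℝ) (1 / 2)) (y : ℝ) :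
    Antitone (fun k => Lf θ y k + Theta θ k) := by
  refine antitone_nat_of_succ_le fun k => ?_
  have h2 := two_mul_Theta_succ_le hθ k
  have h3 := Theta_pos hθ (k + 1)
  simp only [Lf]
  rcases Nf_succ y k with h | h <;> rw [h] <;> push_cast <;> nlinarith

lemma Lf_le {θ : ℕ → ℝ} (hθ : ∀ j, θ j ∈ Set.Ioo (0 : ℝ) (1 / 2)) (y : ℝ) (j k : ℕ) :
    Lf θ y j ≤ Lf θ y k + Theta θ k := by
  have h1 := Lf_mono hθ y (le_max_left j k)
  have h2 := Lf_anti hθ y (le_max_right j k)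
  have h3 := Theta_pos hθ (max j k)
  simp only at h2
  linarith

/-- point of the Cantor set with address given by the binary digits of `y` -/
noncomputable def gf (θ : ℕ → ℝ) (y : ℝ) : ℝ := ⨆ k, Lf θ y k

lemma Lf_le_gf {θ : ℕ → ℝ} (hθ : ∀ j, θ j ∈ Set.Ioo (0 : ℝ) (1 / 2)) (y : ℝ) (k : ℕ) :
    Lf θ y k ≤ gf θ y :=
  le_ciSup (f := Lf θ y) ⟨Lf θ y 0 + Theta θ 0, by rintro _ ⟨j, rfl⟩; exact Lf_le hθ y j 0⟩ k

lemma gf_le {θ : ℕ → ℝ} (hθ : ∀ j, θ j ∈ Set.Ioo (0 : ℝ) (1 / 2)) (y : ℝ) (k : ℕ) :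
    gf θ y ≤ Lf θ y k + Theta θ k :=
  ciSup_le fun j => Lf_le hθ y j k

lemma gf_mem_Icc {θ : ℕ → ℝ} (hθ : ∀ j, θ j ∈ Set.Ioo (0 : ℝ) (1 / 2)) (y : ℝ) :
    gf θ y ∈ Set.Icc (-(1 : ℝ) / 2) (1 / 2) := by
  have h1 := Lf_le_gf hθ y 0
  have h2 := gf_le hθ y 0
  simp only [Lf, Theta_zero] at h1 h2
  exact ⟨h1, by linarith⟩

lemma Lf_eq_cmid {θ : ℕ → ℝ} {y : ℝ} (k : ℕ) :
    cmid θ (fun j : Fin k => decide (Nf y (j + 1) = 2 * Nf y j + 1)) - Theta θ k / 2 = Lf θ y k := by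
  induction k with
  | zero => simp [cmid, Lf, Theta_zero]; norm_num
  | succ k ih =>
    unfold cmid at ih ⊢
    rw [Fin.sum_univ_castSucc]
    simp only [Fin.val_castSucc, Fin.val_last, Lf, ← ih]
    rw [Theta_succ]
    rcases Nf_succ y k with h | h
    · have : ¬ (Nf y (k + 1) = 2 * Nf y k + 1) := by omega
      rw [decide_eq_false this, h]
      simp only [sgn]
      push_cast
      simp
      ring
    · rw [decide_eq_true h, h]
      simp only [sgn]
      push_cast
      simp
      ring

lemma gf_mem {θ : ℕ → ℝ} (hθ : ∀ j, θ j ∈ Set.Ioo (0 : ℝ) (1 / 2)) (y : ℝ) :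
    gf θ y ∈ cantor1 θ := by
  refine Set.mem_iInter.2 fun k => Set.mem_iUnion.2
    ⟨fun j : Fin k => decide (Nf y (j + 1) = 2 * Nf y j + 1), ?_⟩
  have h := Lf_eq_cmid (θ := θ) (y := y) k
  have h1 := Lf_le_gf hθ y k
  have h2 := gf_le hθ y k
  constructor <;> linarith

lemma gf_key {θ : ℕ → ℝ} (hθ : ∀ j, θ j ∈ Set.Ioo (0 : ℝ) (1 / 2)) {y y' : ℝ}
    (hy : y ∈ Set.Ico (0 : ℝ) 1) (hy' : y' ∈ Set.Ico (0 : ℝ) 1) (k : ℕ) :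
    (2 ^ k * |y - y'| - 2) * Theta θ k ≤ |gf θ y - gf θ y'| := by
  wlog h : Nf y' k ≤ Nf y k generalizing y y'
  · rw [abs_sub_comm y, abs_sub_comm (gf θ y)]
    exact this hy' hy (le_of_not_ge h)
  have h1 := Lf_diff hθ hy' hy k h
  have a1 := Lf_le_gf hθ y k
  have a2 := gf_le hθ y' k
  have hT := Theta_pos hθ k
  have h2 : 2 ^ k * |y - y'| ≤ (Nf y k : ℝ) - Nf y' k + 1 := by
    have e : (2 : ℝ) ^ k * |y - y'| = |2 ^ k * y - 2 ^ k * y'| := by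
      rw [← mul_sub, abs_mul, abs_of_pos (by positivity : (0 : ℝ) < 2 ^ k)]
    rw [e, abs_le]
    have b1 := Int.floor_le ((2 : ℝ) ^ k * y)
    have b2 := Int.lt_floor_add_one ((2 : ℝ) ^ k * y)
    have b3 := Int.floor_le ((2 : ℝ) ^ k * y')
    have b4 := Int.lt_floor_add_one ((2 : ℝ) ^ k * y')
    have h' : (Nf y' k : ℝ) ≤ Nf y k := by exact_mod_cast h
    unfold Nf at *
    constructor <;> linarith
  refine le_trans ?_ (le_abs_self _)
  nlinarith

lemma gf_holder {θ : ℕ → ℝ} (hθ : ∀ j, θ j ∈ Set.Ioo (0 : ℝ) (1 / 2)) {α C : ℝ} (hα : 0 < α)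
    (hC : ∀ k, (1 / 2 : ℝ) ^ k ≤ C * Theta θ (k + 1) ^ α) {y y' : ℝ}
    (hy : y ∈ Set.Ico (0 : ℝ) 1) (hy' : y' ∈ Set.Ico (0 : ℝ) 1) :
    |y - y'| ≤ 3 * C * |gf θ y - gf θ y'| ^ α := by
  have key : ∀ k, |gf θ y - gf θ y'| ≤ Theta θ k → |y - y'| ≤ 3 * (1 / 2) ^ k := by
    intro k hk
    have h := (gf_key hθ hy hy' k).trans hk
    have hT := Theta_pos hθ k
    have h3 : (2 ^ k * |y - y'| - 2) ≤ 1 := by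
      by_contra hlt
      push Not at hlt
      nlinarith
    have : |y - y'| = (1 / 2) ^ k * (2 ^ k * |y - y'|) := by
      rw [← mul_assoc, ← mul_pow]; norm_num
    rw [this]
    have : (0 : ℝ) < (1 / 2) ^ k := by positivity
    nlinarith
  have hC0 : 0 ≤ C := by
    have h0 := hC 0
    have := Real.rpow_pos_of_pos (Theta_pos hθ (0 + 1)) α
    by_contra hlt
    push Not at hlt
    simp only [pow_zero] at h0
    nlinarith
  rcases (abs_nonneg (gf θ y - gf θ y')).eq_or_lt with h0 | hpos
  · rw [← h0, Real.zero_rpow hα.ne', mul_zero]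
    have ht : Tendsto (fun k : ℕ => 3 * (1 / 2 : ℝ) ^ k) atTop (nhds (3 * 0)) :=
      (tendsto_pow_atTop_nhds_zero_of_lt_one (by norm_num) (by norm_num)).const_mul 3
    rw [mul_zero] at ht
    exact ge_of_tendsto' ht fun k => key k (by rw [← h0]; exact (Theta_pos hθ k).le)
  · have hex : ∃ n, Theta θ (n + 1) ≤ |gf θ y - gf θ y'| := by
      have := (((tendsto_add_atTop_iff_nat 1).2 (Theta_tendsto hθ)).eventually
        (eventually_le_nhds hpos)).exists
      exact this
    classical
    have hs := Nat.find_spec hex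
    have hle : |gf θ y - gf θ y'| ≤ Theta θ (Nat.find hex) := by
      rcases Nat.eq_zero_or_pos (Nat.find hex) with h | h
      · rw [h, Theta_zero]
        have a := gf_mem_Icc hθ y
        have b := gf_mem_Icc hθ y'
        rw [abs_le]
        constructor <;> linarith [a.1, a.2, b.1, b.2]
      · have := Nat.find_min hex (m := Nat.find hex - 1) (by omega)
        rw [Nat.sub_add_cancel h] at this
        exact (not_le.1 this).le
    calc |y - y'| ≤ 3 * (1 / 2) ^ (Nat.find hex) := key _ hle
      _ ≤ 3 * (C * Theta θ (Nat.find hex + 1) ^ α) := by gcongr; exact hC _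
      _ ≤ 3 * (C * |gf θ y - gf θ y'| ^ α) := by
        gcongr
        exact (Theta_pos hθ _).le
      _ = _ := by ring

lemma exists_C {θ : ℕ → ℝ} (hθ : ∀ j, θ j ∈ Set.Ioo (0 : ℝ) (1 / 2))
    (ht : Tendsto (fun k : ℕ => Theta θ k ^ ((1 : ℝ) / k)) atTop (nhds (1 / 2)))
    {α : ℝ} (hα : 0 < α) (hα1 : α < 1) :
    ∃ C : ℝ, ∀ k, (1 / 2 : ℝ) ^ k ≤ C * Theta θ (k + 1) ^ α := by
  have hlt : (1 / 2 : ℝ) ^ (1 / α) < 1 / 2 := by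
    conv_rhs => rw [← Real.rpow_one (1 / 2 : ℝ)]
    exact Real.rpow_lt_rpow_of_exponent_gt (by norm_num) (by norm_num) (by
      rw [lt_div_iff₀ hα]; linarith)
  have hev : ∀ᶠ k : ℕ in atTop, (1 / 2 : ℝ) ^ k ≤ Theta θ k ^ α := by
    filter_upwards [ht.eventually (lt_mem_nhds hlt), eventually_gt_atTop 0] with k hk hk0
    have hk' : (0 : ℝ) < k := by exact_mod_cast hk0
    have h1 : ((1 / 2 : ℝ) ^ (1 / α)) ^ (α * k) ≤ (Theta θ k ^ ((1 : ℝ) / k)) ^ (α * k) :=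
      Real.rpow_le_rpow (by positivity) hk.le (by positivity)
    rw [← Real.rpow_mul (by norm_num), ← Real.rpow_mul (Theta_pos hθ k).le] at h1
    have e1 : 1 / α * (α * k) = k := by field_simp
    have e2 : (1 : ℝ) / k * (α * k) = α := by field_simp
    rw [e1, e2, Real.rpow_natCast] at h1
    exact h1
  have hev2 : ∀ᶠ k : ℕ in atTop, (1 / 2 : ℝ) ^ k / Theta θ (k + 1) ^ α ≤ 2 := by
    filter_upwards [(tendsto_add_atTop_nat 1).eventually hev] with k hk
    rw [div_le_iff₀ (Real.rpow_pos_of_pos (Theta_pos hθ _) _)]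
    rw [pow_succ] at hk
    linarith
  have hb : IsBoundedUnder (· ≤ ·) atTop
    (fun k : ℕ => (1 / 2 : ℝ) ^ k / Theta θ (k + 1) ^ α) := ⟨2, by simpa using hev2⟩
  obtain ⟨C, hC⟩ := hb.bddAbove_range
  refine ⟨C, fun k => ?_⟩
  have := hC ⟨k, rfl⟩
  simp only at this
  rwa [div_le_iff₀ (Real.rpow_pos_of_pos (Theta_pos hθ _) _)] at this

/-- The tensorized Cantor set in `Fin d → ℝ` (sup metric). -/
def tensorPi (d : ℕ) (θ : ℕ → ℝ) : Set (Fin d → ℝ) :=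
  {x | (∀ i, x i ∈ Set.Icc (-(1 : ℝ) / 2) (1 / 2)) ∧ ∃ i, x i ∈ cantor1 θ}

lemma dimH_tensor_eq (d : ℕ) (θ : ℕ → ℝ) : dimH (tensorCantor d θ) = dimH (tensorPi d θ) := by
  rw [← (EuclideanSpace.equiv (Fin d) ℝ).dimH_preimage]
  rfl

lemma le_dimH_div {d : ℕ} (hd : 0 < d) {θ : ℕ → ℝ} (hθ : ∀ j, θ j ∈ Set.Ioo (0 : ℝ) (1 / 2))
    (ht : Tendsto (fun k : ℕ => Theta θ k ^ ((1 : ℝ) / k)) atTop (nhds (1 / 2)))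
    {α : NNReal} (hα : 0 < α) (hα1 : α < 1) :
    (d : ℝ≥0∞) ≤ dimH (tensorPi d θ) / α := by
  classical
  have hαr : (0 : ℝ) < α := by exact_mod_cast hα
  obtain ⟨C, hC⟩ := exists_C hθ ht (α := α) hαr (by exact_mod_cast hα1)
  have hol := fun {y y' : ℝ} => gf_holder hθ hαr hC (y := y) (y' := y')
  have hinj : Set.InjOn (gf θ) (Set.Ico 0 1) := by
    intro y hy y' hy' h
    have := hol hy hy'
    rw [h, sub_self, abs_zero, Real.zero_rpow hαr.ne', mul_zero] at this
    exact sub_eq_zero.1 (abs_eq_zero.1 (le_antisymm this (abs_nonneg _)))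
  set f : ℝ → ℝ := Function.invFunOn (gf θ) (Set.Ico 0 1) with hf
  have hfg : ∀ y ∈ Set.Ico (0 : ℝ) 1, f (gf θ y) = y := hinj.leftInvOn_invFunOn
  let i0 : Fin d := ⟨0, hd⟩
  let S : Set (Fin d → ℝ) := {x | x i0 ∈ gf θ '' Set.Ico 0 1 ∧
    ∀ i, x i ∈ Set.Icc (-(1 : ℝ) / 2) (1 / 2)}
  let F : (Fin d → ℝ) → (Fin d → ℝ) := fun x => Function.update x i0 (f (x i0))
  have hS : S ⊆ tensorPi d θ := by
    rintro x ⟨⟨y, hy, hxy⟩, hx⟩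
    exact ⟨hx, i0, hxy ▸ gf_mem hθ y⟩
  have hF : HolderOnWith (max 1 (3 * C).toNNReal) α F S := by
    rintro x ⟨⟨y, hy, hxy⟩, hx⟩ x' ⟨⟨y', hy', hxy'⟩, hx'⟩
    rw [edist_pi_le_iff]
    intro i
    have hmono : edist (x i) (x' i) ^ (α : ℝ) ≤ edist x x' ^ (α : ℝ) :=
      ENNReal.rpow_le_rpow (edist_le_pi_edist x x' i) hαr.le
    by_cases hi : i = i0
    · subst hi
      simp only [F, Function.update_self]
      rw [← hxy, ← hxy', hfg y hy, hfg y' hy']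
      calc edist y y' = ENNReal.ofReal |y - y'| := by rw [edist_dist, Real.dist_eq]
        _ ≤ ENNReal.ofReal (3 * C * |gf θ y - gf θ y'| ^ (α : ℝ)) :=
          ENNReal.ofReal_le_ofReal (hol hy hy')
        _ = ENNReal.ofReal (3 * C) * edist (gf θ y) (gf θ y') ^ (α : ℝ) := by
          rw [ENNReal.ofReal_mul' (by positivity), edist_dist, Real.dist_eq,
            ENNReal.ofReal_rpow_of_nonneg (abs_nonneg _) hαr.le]
        _ ≤ _ := by
          rw [← hxy, ← hxy'] at hmono
          refine mul_le_mul' ?_ hmono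
          rw [ENNReal.ofReal]
          exact_mod_cast le_max_right _ _
    · simp only [F, Function.update_of_ne hi]
      have h1 : edist (x i) (x' i) ≤ 1 := by
        rw [edist_dist, Real.dist_eq]
        refine ENNReal.ofReal_le_one.2 ?_
        rw [abs_le]
        constructor <;> linarith [(hx i).1, (hx i).2, (hx' i).1, (hx' i).2]
      calc edist (x i) (x' i) = edist (x i) (x' i) ^ (1 : ℝ) := by rw [ENNReal.rpow_one]
        _ ≤ edist (x i) (x' i) ^ (α : ℝ) :=
          ENNReal.rpow_le_rpow_of_exponent_ge h1 (by exact_mod_cast hα1.le)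
        _ = 1 * edist (x i) (x' i) ^ (α : ℝ) := (one_mul _).symm
        _ ≤ _ := by
          refine mul_le_mul' ?_ hmono
          exact_mod_cast le_max_left _ _
  have hB : Set.pi Set.univ (fun _ : Fin d => Set.Ioo (0 : ℝ) (1 / 2)) ⊆ F '' S := by
    intro z hz
    have hz' : ∀ i, z i ∈ Set.Ioo (0 : ℝ) (1 / 2) := fun i => hz i (Set.mem_univ i)
    have h0 : z i0 ∈ Set.Ico (0 : ℝ) 1 := ⟨(hz' i0).1.le, by linarith [(hz' i0).2]⟩
    refine ⟨Function.update z i0 (gf θ (z i0)), ⟨⟨z i0, h0, by simp⟩, fun i => ?_⟩, ?_⟩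
    · by_cases hi : i = i0
      · subst hi
        simpa using gf_mem_Icc hθ (z i0)
      · rw [Function.update_of_ne hi]
        exact ⟨by linarith [(hz' i).1], (hz' i).2.le⟩
    · simp only [F, Function.update_self, Function.update_idem, hfg _ h0, Function.update_eq_self]
  have hdB : dimH (Set.pi Set.univ (fun _ : Fin d => Set.Ioo (0 : ℝ) (1 / 2))) = d := by
    have ho : IsOpen (Set.pi Set.univ (fun _ : Fin d => Set.Ioo (0 : ℝ) (1 / 2))) :=
      isOpen_set_pi Set.finite_univ fun _ _ => isOpen_Ioo
    rw [Real.dimH_of_nonempty_interior, Module.finrank_fin_fun]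
    rw [ho.interior_eq]
    exact ⟨fun _ => 1 / 4, fun _ _ => by constructor <;> norm_num⟩
  calc (d : ℝ≥0∞) = _ := hdB.symm
    _ ≤ dimH (F '' S) := dimH_mono hB
    _ ≤ dimH S / α := hF.dimH_image_le hα
    _ ≤ _ := by gcongr

lemma le_dimH {d : ℕ} (hd : 0 < d) {θ : ℕ → ℝ} (hθ : ∀ j, θ j ∈ Set.Ioo (0 : ℝ) (1 / 2))
    (ht : Tendsto (fun k : ℕ => Theta θ k ^ ((1 : ℝ) / k)) atTop (nhds (1 / 2))) :
    (d : ℝ≥0∞) ≤ dimH (tensorPi d θ) := by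
  by_contra hlt
  push Not at hlt
  obtain ⟨r, h1, h2⟩ := ENNReal.lt_iff_exists_nnreal_btwn.1 hlt
  have hd' : (0 : NNReal) < d := by exact_mod_cast hd
  have hr : 0 < r := by
    have : (0 : ℝ≥0∞) < r := lt_of_le_of_lt zero_le h1
    exact_mod_cast this
  have h2' : r < d := by exact_mod_cast h2
  have := le_dimH_div hd hθ ht (α := r / d) (by positivity) ((div_lt_one hd').2 h2')
  rw [ENNReal.le_div_iff_mul_le (Or.inl (by
    have : r / d ≠ 0 := by positivity
    exact_mod_cast this)) (Or.inl ENNReal.coe_ne_top)] at this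
  have e : (d : ℝ≥0∞) * ((r / d : NNReal) : ℝ≥0∞) = r := by
    have : (d : NNReal) * (r / d) = r := by field_simp
    exact_mod_cast congrArg ((↑) : NNReal → ℝ≥0∞) this
  rw [e] at this
  exact absurd this (not_le.2 h1)

lemma exists_c {θ : ℕ → ℝ} (hθ : ∀ j, θ j ∈ Set.Ioo (0 : ℝ) (1 / 2))
    (ht : ¬ Tendsto (fun k : ℕ => Theta θ k ^ ((1 : ℝ) / k)) atTop (nhds (1 / 2))) :
    ∃ t : ℝ, 0 < t ∧ t < 1 ∧ ∃ᶠ k : ℕ in atTop, 2 ^ k * Theta θ k ^ t ≤ 1 := by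
  have hle : ∀ᶠ k : ℕ in atTop, Theta θ k ^ ((1 : ℝ) / k) ≤ 1 / 2 := by
    filter_upwards [eventually_gt_atTop 0] with k hk
    have hk' : (k : ℝ) ≠ 0 := by exact_mod_cast hk.ne'
    calc Theta θ k ^ ((1 : ℝ) / k) ≤ ((1 / 2 : ℝ) ^ k) ^ ((1 : ℝ) / k) :=
          Real.rpow_le_rpow (Theta_pos hθ k).le (Theta_le hθ k) (by positivity)
      _ = 1 / 2 := by
          rw [← Real.rpow_natCast, ← Real.rpow_mul (by norm_num), mul_one_div_cancel hk',
            Real.rpow_one]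
  have : ∃ c : ℝ, c < 1 / 2 ∧ ∃ᶠ k : ℕ in atTop, Theta θ k ^ ((1 : ℝ) / k) ≤ c := by
    by_contra hcon
    push Not at hcon
    refine ht (tendsto_order.2 ⟨fun c hc => ?_, fun c hc => ?_⟩)
    · exact hcon c hc
    · filter_upwards [hle] with k hk using hk.trans_lt hc
  obtain ⟨c, hc, hfr⟩ := this
  -- choose `t` with `c ≤ (1/2)^(1/t)`
  obtain ⟨c', hc1, hc2⟩ := exists_between (max_lt hc (by norm_num : (1 / 4 : ℝ) < 1 / 2))
  have hc'0 : 0 < c' := lt_trans (by norm_num) ((le_max_right _ _).trans_lt hc1)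
  have hlog : Real.log c' < - Real.log 2 := by
    rw [← Real.log_inv]
    exact Real.log_lt_log hc'0 (by linarith)
  have hl2 : 0 < Real.log 2 := Real.log_pos (by norm_num)
  refine ⟨Real.log 2 / (- Real.log c'), div_pos hl2 (by linarith),
    (div_lt_one (by linarith)).2 (by linarith), ?_⟩
  refine (hfr.and_eventually (eventually_gt_atTop 0)).mono fun k hk => ?_
  obtain ⟨hk, hk0⟩ := hk
  have hk' : (0 : ℝ) < k := by exact_mod_cast hk0
  have hT := Theta_pos hθ k
  have h1 : Theta θ k ^ ((1 : ℝ) / k) ≤ c' := hk.trans ((le_max_left _ _).trans hc1.le)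
  have h2 := Real.log_le_log (Real.rpow_pos_of_pos hT _) h1
  rw [Real.log_rpow hT, one_div, inv_mul_le_iff₀ hk'] at h2
  have hp : 0 < Theta θ k ^ (Real.log 2 / (- Real.log c')) := Real.rpow_pos_of_pos hT _
  rw [← Real.log_nonpos_iff (by positivity), Real.log_mul (by positivity) hp.ne', Real.log_pow,
    Real.log_rpow hT]
  have hn : 0 < - Real.log c' := by linarith
  have h3 : Real.log 2 / (- Real.log c') * Real.log (Theta θ k) ≤
      Real.log 2 / (- Real.log c') * (k * Real.log c') := by
    gcongr
  have h4 : Real.log 2 / (- Real.log c') * (k * Real.log c') = - (k * Real.log 2) := by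
    have : Real.log c' ≠ 0 := by linarith
    field_simp
  linarith

lemma dimH_slice_le {d : ℕ} {θ : ℕ → ℝ} (hθ : ∀ j, θ j ∈ Set.Ioo (0 : ℝ) (1 / 2))
    {t : ℝ} (ht0 : 0 < t) (hfr : ∃ᶠ k : ℕ in atTop, 2 ^ k * Theta θ k ^ t ≤ 1) (i : Fin d) :
    dimH {x : Fin d → ℝ | (∀ j, x j ∈ Set.Icc (-(1 : ℝ) / 2) (1 / 2)) ∧ x i ∈ cantor1 θ} ≤
      (((d - 1 : ℕ) + t.toNNReal : NNReal) : ℝ≥0∞) := by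
  classical
  apply dimH_le_of_hausdorffMeasure_ne_top
  set s : ℝ := (((d - 1 : ℕ) + t.toNNReal : NNReal) : ℝ) with hs
  have hs' : s = (d - 1 : ℕ) + t := by
    rw [hs, NNReal.coe_add, NNReal.coe_natCast, Real.coe_toNNReal _ ht0.le]
  let M : ℕ → ℕ := fun k => ⌈1 / Theta θ k⌉₊
  let I : (k : ℕ) → ({j : Fin d // j ≠ i} → Fin (M k)) → (Fin k → Bool) → Fin d → Set ℝ :=
    fun k m σ j => if h : j = i then whiteInterval θ σ else
      Set.Icc (-(1 : ℝ) / 2 + (m ⟨j, h⟩ : ℕ) * Theta θ k)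
        (-(1 : ℝ) / 2 + (m ⟨j, h⟩ : ℕ) * Theta θ k + Theta θ k)
  let T : (k : ℕ) → (({j : Fin d // j ≠ i} → Fin (M k)) × (Fin k → Bool)) → Set (Fin d → ℝ) :=
    fun k p => Set.pi Set.univ (I k p.1 p.2)
  have hdiam : ∀ k p, Metric.ediam (T k p) ≤ ENNReal.ofReal (Theta θ k) := by
    intro k p
    refine Metric.ediam_pi_le_of_le fun j => ?_
    simp only [I]
    split_ifs with h
    · rw [whiteInterval, Real.ediam_Icc]
      apply ENNReal.ofReal_le_ofReal
      linarith
    · rw [Real.ediam_Icc]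
      apply ENNReal.ofReal_le_ofReal
      linarith
  have hcover : ∀ k, {x : Fin d → ℝ | (∀ j, x j ∈ Set.Icc (-(1 : ℝ) / 2) (1 / 2)) ∧
      x i ∈ cantor1 θ} ⊆ ⋃ p, T k p := by
    rintro k x ⟨hx, hxi⟩
    obtain ⟨σ, hσ⟩ := Set.mem_iUnion.1 (Set.mem_iInter.1 hxi k)
    have hT := Theta_pos hθ k
    have hM : 1 ≤ M k * Theta θ k := by
      have := Nat.le_ceil (1 / Theta θ k)
      rwa [div_le_iff₀ hT] at this
    have hM0 : 0 < M k := Nat.ceil_pos.2 (by positivity)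
    have hex : ∀ j, ∃ m : Fin (M k), x j ∈ Set.Icc (-(1 : ℝ) / 2 + (m : ℕ) * Theta θ k)
        (-(1 : ℝ) / 2 + (m : ℕ) * Theta θ k + Theta θ k) := by
      intro j
      obtain ⟨h1, h2⟩ := hx j
      by_cases hlt : ⌊(x j + 1 / 2) / Theta θ k⌋₊ < M k
      · refine ⟨⟨_, hlt⟩, ?_⟩
        have a := Nat.floor_le (a := (x j + 1 / 2) / Theta θ k) (div_nonneg (by linarith) hT.le)
        have b := Nat.lt_floor_add_one ((x j + 1 / 2) / Theta θ k)
        rw [le_div_iff₀ hT] at a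
        rw [div_lt_iff₀ hT] at b
        constructor <;> simp only <;> linarith
      · push Not at hlt
        have a := (Nat.le_floor_iff (a := (x j + 1 / 2) / Theta θ k)
          (div_nonneg (by linarith) hT.le)).1 hlt
        rw [le_div_iff₀ hT] at a
        refine ⟨⟨M k - 1, by omega⟩, ?_⟩
        simp only
        rw [Nat.cast_sub hM0]
        push_cast
        constructor <;> nlinarith
    choose m hm using hex
    refine Set.mem_iUnion.2 ⟨(fun j => m j.1, σ), fun j _ => ?_⟩
    simp only [I]
    split_ifs with h
    · rw [h]; exact hσ
    · exact hm j
  have hle := Measure.hausdorffMeasure_le_liminf_sum (l := atTop) s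
    {x : Fin d → ℝ | (∀ j, x j ∈ Set.Icc (-(1 : ℝ) / 2) (1 / 2)) ∧ x i ∈ cantor1 θ}
    (fun k => ENNReal.ofReal (Theta θ k))
    (by simpa using ENNReal.tendsto_ofReal (Theta_tendsto hθ)) T
    (Eventually.of_forall hdiam) (Eventually.of_forall hcover)
  refine ne_top_of_le_ne_top (b := ENNReal.ofReal (2 ^ (d - 1))) ENNReal.ofReal_ne_top
    (hle.trans (liminf_le_of_frequently_le' (hfr.mono fun k hk => ?_)))
  have hT := Theta_pos hθ k
  have hs0 : 0 ≤ s := NNReal.coe_nonneg _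
  calc ∑ p, Metric.ediam (T k p) ^ s ≤ ∑ p : (({j : Fin d // j ≠ i} → Fin (M k)) × (Fin k → Bool)),
        ENNReal.ofReal (Theta θ k) ^ s :=
        Finset.sum_le_sum fun p _ => ENNReal.rpow_le_rpow (hdiam k p) hs0
    _ = ENNReal.ofReal ((M k ^ (d - 1) * 2 ^ k : ℕ) * Theta θ k ^ s) := by
      rw [Finset.sum_const, Finset.card_univ, nsmul_eq_mul, ENNReal.ofReal_mul (by positivity),
        ENNReal.ofReal_rpow_of_nonneg hT.le hs0, ENNReal.ofReal_natCast]
      simp [Fintype.card_subtype_compl]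
    _ ≤ _ := by
      apply ENNReal.ofReal_le_ofReal
      rw [hs', Real.rpow_add hT, Real.rpow_natCast]
      push_cast
      have hM : M k * Theta θ k ≤ 2 := by
        have h1 : 1 ≤ 1 / Theta θ k := by
          rw [le_div_iff₀ hT]
          have := Theta_le hθ k
          have : (1 / 2 : ℝ) ^ k ≤ 1 := pow_le_one₀ (by norm_num) (by norm_num)
          linarith
        have h2 := Nat.ceil_lt_add_one (a := 1 / Theta θ k) (by positivity)
        have h3 : (M k : ℝ) ≤ 2 / Theta θ k := by
          have : 2 / Theta θ k = 1 / Theta θ k + 1 / Theta θ k := by ring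
          rw [this]
          exact h2.le.trans (by linarith)
        rwa [le_div_iff₀ hT] at h3
      calc (M k : ℝ) ^ (d - 1) * 2 ^ k * (Theta θ k ^ (d - 1) * Theta θ k ^ t)
          = (M k * Theta θ k) ^ (d - 1) * (2 ^ k * Theta θ k ^ t) := by rw [mul_pow]; ring
        _ ≤ 2 ^ (d - 1) * 1 := by gcongr
        _ = _ := mul_one _

lemma dimH_lt {d : ℕ} (hd : 0 < d) {θ : ℕ → ℝ} (hθ : ∀ j, θ j ∈ Set.Ioo (0 : ℝ) (1 / 2))
    (ht : ¬ Tendsto (fun k : ℕ => Theta θ k ^ ((1 : ℝ) / k)) atTop (nhds (1 / 2))) :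
    dimH (tensorPi d θ) < d := by
  obtain ⟨t, ht0, ht1, hfr⟩ := exists_c hθ ht
  have hU : tensorPi d θ = ⋃ i : Fin d,
      {x : Fin d → ℝ | (∀ j, x j ∈ Set.Icc (-(1 : ℝ) / 2) (1 / 2)) ∧ x i ∈ cantor1 θ} := by
    ext x
    simp [tensorPi]
  rw [hU, dimH_iUnion]
  refine (iSup_le fun i => dimH_slice_le hθ ht0 hfr i).trans_lt ?_
  have h : ((d - 1 : ℕ) + t.toNNReal : NNReal) < d := by
    rw [← NNReal.coe_lt_coe]
    rw [NNReal.coe_add, NNReal.coe_natCast, NNReal.coe_natCast, Real.coe_toNNReal _ ht0.le,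
      Nat.cast_sub hd]
    push_cast
    linarith
  exact_mod_cast ENNReal.coe_lt_coe.2 h

/-- The tensorized Cantor set has Hausdorff dimension `d` iff `Θ_k^{1/k} → 1/2`. -/
theorem dimH_tensorCantor_eq_iff (d : ℕ) (hd : 0 < d)
    (θ : ℕ → ℝ) (hθ : ∀ j, θ j ∈ Set.Ioo (0 : ℝ) (1 / 2)) :
    dimH (tensorCantor d θ) = (d : ℝ≥0∞) ↔
      Tendsto (fun k : ℕ => Theta θ k ^ ((1 : ℝ) / k)) atTop (nhds (1 / 2)) := by
  rw [dimH_tensor_eq]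
  constructor
  · intro h
    by_contra hcon
    exact (dimH_lt hd hθ hcon).ne h
  · intro ht
    refine le_antisymm ?_ (le_dimH hd hθ ht)
    rw [← Real.dimH_univ_pi_fin d]
    exact dimH_mono (Set.subset_univ _)
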